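/- arXiv:math/0002135 — 2 statements merged into one kernel-verified Lean document; each statement's English description precedes it below -/
import Mathlib

section
/- Let m ∈ ℤ and let z, z' be real numbers with m < z < m+1 and m < z' < m+1 (complementary series). Then for every n ∈ ℕ and every partition λ of n, the z-measure value M_n(λ) = (n!/(zz')_n) Π_{□∈λ}(z+c(□))(z'+c(□))/h(□)² is a strictly positive real number, and Σ_{|λ|=n} M_n(λ) = 1. -/
open scoped Classical

noncomputable section

/-- The content of a cell `c = (i, j)` (0-indexed row `i` and column `j`) of a Young diagram:
`c(□) = column(□) - row(□)`. -/
def cellContent (c : ℕ × ℕ) : ℤ := (c.2 : ℤ) - (c.1 : ℤ)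

/-- The hook length of the cell `c = (i, j)` of the Young diagram `Y`:
`h(□) = λ_i - j + λ'_j - i - 1` in 0-indexed coordinates. -/
def hookLen (Y : YoungDiagram) (c : ℕ × ℕ) : ℕ :=
  (Y.rowLen c.1 - c.2) + (Y.colLen c.2 - c.1) - 1

/-- The product `Π_{□ ∈ λ} (z + c(□)) (z' + c(□)) / h(□)²`. -/
def zWeight (z z' : ℂ) (Y : YoungDiagram) : ℂ :=
  ∏ c ∈ Y.cells, ((z + cellContent c) * (z' + cellContent c) / (hookLen Y c : ℂ) ^ 2)

/-- The finset of squares addable to the Young diagram `Y`: cells `c ∉ Y` such that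
adding `c` to `Y` again yields a Young diagram, i.e. every strictly smaller cell
(in the product order) already belongs to `Y`.  Any such cell has the form
`(i, Y.rowLen i)` for some `i ≤ Y.colLen 0`. -/
def addables (Y : YoungDiagram) : Finset (ℕ × ℕ) :=
  ((Finset.range (Y.colLen 0 + 1)).image fun i => (i, Y.rowLen i)).filter
    fun c => ∀ d : ℕ × ℕ, d ≤ c → d ≠ c → d ∈ Y.cells

/-- Add a square to a Young diagram (when the result is again a Young diagram;
junk value `Y` otherwise). -/
def addBox (Y : YoungDiagram) (c : ℕ × ℕ) : YoungDiagram :=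
  if h : c ∉ Y.cells ∧ ∀ d : ℕ × ℕ, d ≤ c → d ≠ c → d ∈ Y.cells then
    { cells := insert c Y.cells,
      isLowerSet := by
        intro a b hba ha
        simp only [Finset.coe_insert, Set.mem_insert_iff, Finset.mem_coe] at ha ⊢
        rcases ha with rfl | ha
        · by_cases hbc : b = a
          · exact Or.inl hbc
          · exact Or.inr (h.2 b hba hbc)
        · exact Or.inr (Y.isLowerSet hba ha) }
  else Y

/-- The finset of squares removable from the Young diagram `Y`: the corners of `Y`. -/
def removables (Y : YoungDiagram) : Finset (ℕ × ℕ) :=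
  Y.cells.filter fun c => (c.1 + 1, c.2) ∉ Y.cells ∧ (c.1, c.2 + 1) ∉ Y.cells

/-- Remove a square from a Young diagram (when the result is again a Young diagram;
junk value `Y` otherwise). -/
def removeBox (Y : YoungDiagram) (c : ℕ × ℕ) : YoungDiagram :=
  if h : (c.1 + 1, c.2) ∉ Y.cells ∧ (c.1, c.2 + 1) ∉ Y.cells then
    { cells := Y.cells.erase c,
      isLowerSet := by
        intro a b hba ha
        rw [Finset.coe_erase, Set.mem_diff] at ha ⊢
        refine ⟨Y.isLowerSet hba ha.1, ?_⟩
        rintro rfl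
        rcases lt_or_eq_of_le hba with hlt | rfl
        · rcases Prod.lt_iff.mp hlt with ⟨h1, h2⟩ | ⟨h1, h2⟩
          · exact h.1 (Y.isLowerSet (Prod.mk_le_mk.mpr ⟨h1, h2⟩) ha.1)
          · exact h.2 (Y.isLowerSet (Prod.mk_le_mk.mpr ⟨h1, h2⟩) ha.1)
        · exact ha.2 rfl }
  else Y


/-- The real-valued product `Π_{□ ∈ λ} (z + c(□)) (z' + c(□)) / h(□)²` for real `z, z'`. -/
def zWeightR (z z' : ℝ) (Y : YoungDiagram) : ℝ :=
  ∏ c ∈ Y.cells, ((z + cellContent c) * (z' + cellContent c) / (hookLen Y c : ℝ) ^ 2)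

/-- The partial fraction coefficients `∏_{j ≠ i} (1 + 1/(v i - v j))`. -/
def pfA {ι : Type*} [DecidableEq ι] (s : Finset ι) (v : ι → ℝ) (i : ι) : ℝ :=
  ∏ j ∈ s.erase i, (1 + (v i - v j)⁻¹)

lemma pfA_insert_self {ι : Type*} [DecidableEq ι] (s : Finset ι) (v : ι → ℝ) (y : ι) (hy : y ∉ s) :
    pfA (insert y s) v y = ∏ j ∈ s, (1 + (v y - v j)⁻¹) := by
  unfold pfA; rw [Finset.erase_insert hy]

lemma pfA_insert {ι : Type*} [DecidableEq ι] (s : Finset ι) (v : ι → ℝ) (y i : ι) (hy : y ∉ s) (hi : i ∈ s) :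
    pfA (insert y s) v i = pfA s v i * (1 + (v i - v y)⁻¹) := by
  unfold pfA
  have hne : y ≠ i := by rintro rfl; exact hy hi
  rw [Finset.erase_insert_of_ne hne, Finset.prod_insert (by simp [hy]), mul_comm]

lemma pf_expand {ι : Type*} [DecidableEq ι] (s : Finset ι) (v : ι → ℝ) (hv : Set.InjOn v s) (x : ℝ)
    (hx : ∀ i ∈ s, x ≠ v i) :
    ∏ i ∈ s, (1 + (x - v i)⁻¹) = 1 + ∑ i ∈ s, pfA s v i * (x - v i)⁻¹ := by
  induction s using Finset.induction_on generalizing x with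
  | empty => simp
  | insert y s hy ih =>
    have hv' : Set.InjOn v s := hv.mono (by simp)
    have hys : ∀ i ∈ s, v y ≠ v i := by
      intro i hi h
      have := hv (by simp) (by simp [hi]) h
      exact hy (this ▸ hi)
    rw [Finset.prod_insert hy, Finset.sum_insert hy, pfA_insert_self _ _ _ hy,
      ih hv' x (fun i hi => hx i (by simp [hi])), ih hv' (v y) hys]
    have hxy : x - v y ≠ 0 := sub_ne_zero.2 (hx y (by simp))
    have key : ∑ i ∈ s, pfA (insert y s) v i * (x - v i)⁻¹ =
        (1 + (x - v y)⁻¹) * (∑ i ∈ s, pfA s v i * (x - v i)⁻¹)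
         - (∑ i ∈ s, pfA s v i * (v y - v i)⁻¹) * (x - v y)⁻¹ := by
      rw [Finset.mul_sum, Finset.sum_mul, ← Finset.sum_sub_distrib]
      refine Finset.sum_congr rfl fun i hi => ?_
      rw [pfA_insert _ _ _ _ hy hi]
      have h1 : x - v i ≠ 0 := sub_ne_zero.2 (hx i (by simp [hi]))
      have h2 : v y - v i ≠ 0 := sub_ne_zero.2 (hys i hi)
      have h3 : v i - v y ≠ 0 := sub_ne_zero.2 (hys i hi).symm
      have h4 : (v i - v y)⁻¹ = -(v y - v i)⁻¹ := by rw [← neg_sub, inv_neg]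
      rw [h4]
      field_simp
      ring
    rw [key]
    ring

lemma pf_moments {ι : Type*} [DecidableEq ι] (s : Finset ι) (v : ι → ℝ) (hv : Set.InjOn v s) :
    ∑ i ∈ s, pfA s v i = s.card ∧
    ∑ i ∈ s, pfA s v i * v i = ∑ i ∈ s, v i + (s.card : ℝ) * (s.card - 1) / 2 := by
  induction s using Finset.induction_on with
  | empty => simp
  | insert y s hy ih =>
    have hv' : Set.InjOn v s := hv.mono (by simp)
    have hys : ∀ i ∈ s, v y ≠ v i := by
      intro i hi h
      have := hv (by simp) (by simp [hi]) h
      exact hy (this ▸ hi)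
    obtain ⟨ih1, ih2⟩ := ih hv'
    simp only [Finset.sum_insert hy, pfA_insert_self _ _ _ hy, pf_expand s v hv' (v y) hys,
      Finset.card_insert_of_notMem hy]
    have h4 : ∀ i, (v i - v y)⁻¹ = -(v y - v i)⁻¹ := fun i => by rw [← neg_sub, inv_neg]
    have k1 : ∑ i ∈ s, pfA (insert y s) v i =
        ∑ i ∈ s, pfA s v i - ∑ i ∈ s, pfA s v i * (v y - v i)⁻¹ := by
      rw [← Finset.sum_sub_distrib]
      refine Finset.sum_congr rfl fun i hi => ?_
      rw [pfA_insert _ _ _ _ hy hi, h4]; ring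
    have k2 : ∑ i ∈ s, pfA (insert y s) v i * v i =
        ∑ i ∈ s, pfA s v i * v i + ∑ i ∈ s, pfA s v i
          - (∑ i ∈ s, pfA s v i * (v y - v i)⁻¹) * v y := by
      rw [Finset.sum_mul, ← Finset.sum_add_distrib, ← Finset.sum_sub_distrib]
      refine Finset.sum_congr rfl fun i hi => ?_
      rw [pfA_insert _ _ _ _ hy hi, h4]
      have h2 : v y - v i ≠ 0 := sub_ne_zero.2 (hys i hi)
      field_simp
      ring
    rw [k1, k2, ih1, ih2]
    push_cast
    constructor <;> ring

/-- Shifted row lengths. -/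
def shL {N : ℕ} (l : Fin N → ℕ) (i : Fin N) : ℕ := l i + (N - 1 - i)

/-- The Frobenius form of the inverse hook product. -/
def frobG {N : ℕ} (l : Fin N → ℕ) : ℝ :=
  (∏ p : Fin N, ∏ q ∈ Finset.Ioi p, ((shL l p : ℝ) - shL l q)) / ∏ p : Fin N, ((shL l p).factorial : ℝ)

/-- Product of `z + content`. -/
def contP {N : ℕ} (z : ℝ) (l : Fin N → ℕ) : ℝ :=
  ∏ i : Fin N, ∏ j ∈ Finset.range (l i), (z + ((j : ℝ) - (i : ℕ)))

lemma vand_update {N : ℕ} (x y : Fin N → ℝ) (i : Fin N) (hx : Function.Injective x)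
    (hxy : ∀ j, j ≠ i → y j = x j) :
    (∏ p : Fin N, ∏ q ∈ Finset.Ioi p, (y p - y q)) =
    (∏ p : Fin N, ∏ q ∈ Finset.Ioi p, (x p - x q)) *
      ∏ j ∈ Finset.univ.erase i, ((y i - x j) / (x i - x j)) := by
  have hne : ∀ p q, p ≠ q → x p - x q ≠ 0 := fun p q h => sub_ne_zero.2 (fun e => h (hx e))
  have hV : (∏ p : Fin N, ∏ q ∈ Finset.Ioi p, (x p - x q)) ≠ 0 := by
    refine Finset.prod_ne_zero_iff.2 fun p _ => Finset.prod_ne_zero_iff.2 fun q hq => ?_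
    exact hne p q (Finset.mem_Ioi.1 hq).ne
  rw [mul_comm, ← div_eq_iff hV]
  simp only [← Finset.prod_div_distrib]
  let F : Fin N → Fin N → ℝ := fun p q => if p < q then (y p - y q) / (x p - x q) else 1
  have e1 : ∀ p : Fin N, ∏ q ∈ Finset.Ioi p, ((y p - y q) / (x p - x q)) = ∏ q, F p q := by
    intro p
    simp only [F]
    rw [← Finset.prod_filter]
    refine Finset.prod_congr ?_ fun _ _ => rfl
    ext q; simp
  simp only [e1]
  have e2 : ∀ p q, F p q = (if p = i then F i q else 1) * (if q = i then F p i else 1) := by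
    intro p q
    by_cases hp : p = i
    · subst hp
      by_cases hq : q = p
      · subst hq; simp [F]
      · simp [hq]
    · by_cases hq : q = i
      · subst hq; simp [hp]
      · simp only [hp, hq, if_false, F, hxy p hp, hxy q hq, mul_one]
        split_ifs with h
        · exact div_self (hne p q h.ne)
        · rfl
  have e3 : ∏ p, ∏ q, F p q = (∏ q, F i q) * ∏ p, F p i := by
    rw [Finset.prod_congr rfl fun p _ => Finset.prod_congr rfl fun q _ => e2 p q]
    simp only [Finset.prod_mul_distrib]
    congr 1
    · rw [Finset.prod_comm]
      refine Finset.prod_congr rfl fun q _ => ?_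
      simp [F]
    · refine Finset.prod_congr rfl fun q _ => ?_
      simp [F]
  rw [e3, ← Finset.prod_mul_distrib, ← Finset.mul_prod_erase _ _ (Finset.mem_univ i)]
  have : F i i * F i i = 1 := by simp [F]
  rw [this, one_mul]
  refine Finset.prod_congr rfl fun j hj => ?_
  have hj : j ≠ i := (Finset.mem_erase.1 hj).1
  rcases lt_or_gt_of_ne hj with h | h
  · simp only [F, h, not_lt_of_gt h, if_true, if_false, one_mul, hxy j hj]
    rw [← neg_sub, ← neg_sub (x i), neg_div_neg_eq]
  · simp only [F, h, not_lt_of_gt h, if_true, if_false, mul_one, hxy j hj]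

lemma shL_strictAnti {N : ℕ} {l : Fin N → ℕ} (hl : Antitone l) : StrictAnti (shL l) := by
  intro a b hab
  have := hl hab.le
  have h1 : (a : ℕ) < b := hab
  have := b.2
  unfold shL; omega

lemma antitone_of_shL {N : ℕ} {l : Fin N → ℕ} (hl : StrictAnti (shL l)) : Antitone l := by
  rcases N with _ | N
  · intro a; exact a.elim0
  refine Fin.antitone_iff_succ_le.2 fun i => ?_
  have := hl (Fin.castSucc_lt_succ (i := i))
  have := i.2
  simp only [shL, Fin.val_castSucc, Fin.val_succ] at *
  omega

/-- Adding a box in row `i`. -/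
def upR {N : ℕ} (l : Fin N → ℕ) (i : Fin N) : Fin N → ℕ := Function.update l i (l i + 1)
/-- Removing a box from row `i`. -/
def downR {N : ℕ} (l : Fin N → ℕ) (i : Fin N) : Fin N → ℕ := Function.update l i (l i - 1)

lemma frobG_up {N : ℕ} {l : Fin N → ℕ} (hl : Antitone l) (i : Fin N) :
    frobG (upR l i) = frobG l * (pfA Finset.univ (fun j => (shL l j : ℝ)) i * ((shL l i : ℝ) + 1)⁻¹) := by
  have hinj : Function.Injective (fun j => (shL l j : ℝ)) :=
    fun a b h => (shL_strictAnti hl).injective (by simpa using h)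
  have hi : shL (upR l i) i = shL l i + 1 := by simp [shL, upR]; omega
  have hj : ∀ j, j ≠ i → shL (upR l i) j = shL l j := fun j h => by simp [shL, upR, h]
  unfold frobG pfA
  rw [vand_update (fun j => (shL l j : ℝ)) (fun j => (shL (upR l i) j : ℝ)) i hinj
    (fun j h => by simp only [hj j h])]
  rw [← Finset.mul_prod_erase _ (fun p => ((shL (upR l i) p).factorial : ℝ)) (Finset.mem_univ i),
    ← Finset.mul_prod_erase _ (fun p => ((shL l p).factorial : ℝ)) (Finset.mem_univ i)]
  have e1 : ∏ p ∈ Finset.univ.erase i, ((shL (upR l i) p).factorial : ℝ)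
     = ∏ p ∈ Finset.univ.erase i, ((shL l p).factorial : ℝ) :=
    Finset.prod_congr rfl fun p hp => by rw [hj p (Finset.mem_erase.1 hp).1]
  have e2 : ∏ j ∈ Finset.univ.erase i, (((shL (upR l i) i : ℝ) - shL l j) / ((shL l i : ℝ) - shL l j))
     = ∏ j ∈ Finset.univ.erase i, (1 + ((shL l i : ℝ) - shL l j)⁻¹) := by
    refine Finset.prod_congr rfl fun p hp => ?_
    have : (shL l i : ℝ) - shL l p ≠ 0 :=
      sub_ne_zero.2 (fun e => (Finset.mem_erase.1 hp).1 (hinj e).symm)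
    rw [hi]; push_cast; field_simp; ring
  rw [e1, e2, hi, Nat.factorial_succ]
  push_cast
  have hf : ∏ p ∈ Finset.univ.erase i, ((shL l p).factorial : ℝ) ≠ 0 :=
    Finset.prod_ne_zero_iff.2 fun p _ => by positivity
  have hf2 : ((shL l i).factorial : ℝ) ≠ 0 := by positivity
  have hf3 : (shL l i : ℝ) + 1 ≠ 0 := by positivity
  field_simp

lemma frobG_down {N : ℕ} {l : Fin N → ℕ} (hl : Antitone l) (i : Fin N) (h0 : 0 < l i) :
    frobG (downR l i) = frobG l * (pfA Finset.univ (fun j => -(shL l j : ℝ)) i * (shL l i : ℝ)) := by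
  have hinj : Function.Injective (fun j => (shL l j : ℝ)) :=
    fun a b h => (shL_strictAnti hl).injective (by simpa using h)
  have hi : shL l i = shL (downR l i) i + 1 := by simp [shL, downR]; omega
  have hj : ∀ j, j ≠ i → shL (downR l i) j = shL l j := fun j h => by simp [shL, downR, h]
  unfold frobG pfA
  rw [vand_update (fun j => (shL l j : ℝ)) (fun j => (shL (downR l i) j : ℝ)) i hinj
    (fun j h => by simp only [hj j h])]
  rw [← Finset.mul_prod_erase _ (fun p => ((shL (downR l i) p).factorial : ℝ)) (Finset.mem_univ i),
    ← Finset.mul_prod_erase _ (fun p => ((shL l p).factorial : ℝ)) (Finset.mem_univ i)]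
  have e1 : ∏ p ∈ Finset.univ.erase i, ((shL (downR l i) p).factorial : ℝ)
     = ∏ p ∈ Finset.univ.erase i, ((shL l p).factorial : ℝ) :=
    Finset.prod_congr rfl fun p hp => by rw [hj p (Finset.mem_erase.1 hp).1]
  have e2 : ∏ j ∈ Finset.univ.erase i, (((shL (downR l i) i : ℝ) - shL l j) / ((shL l i : ℝ) - shL l j))
     = ∏ j ∈ Finset.univ.erase i, (1 + (-(shL l i : ℝ) - -(shL l j : ℝ))⁻¹) := by
    refine Finset.prod_congr rfl fun p hp => ?_
    have : (shL l i : ℝ) - shL l p ≠ 0 :=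
      sub_ne_zero.2 (fun e => (Finset.mem_erase.1 hp).1 (hinj e).symm)
    have e : (-(shL l i : ℝ) - -(shL l p : ℝ)) = -((shL l i : ℝ) - shL l p) := by ring
    have hi' : (shL (downR l i) i : ℝ) = shL l i - 1 := by rw [hi]; push_cast; ring
    rw [e, inv_neg, hi']; field_simp; ring
  rw [e1, e2]
  have hf : ∏ p ∈ Finset.univ.erase i, ((shL l p).factorial : ℝ) ≠ 0 :=
    Finset.prod_ne_zero_iff.2 fun p _ => by positivity
  have hfac : ((shL l i).factorial : ℝ) = (shL l i : ℝ) * ((shL (downR l i) i).factorial : ℝ) := by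
    conv_lhs => rw [hi, Nat.factorial_succ]
    rw [hi]; push_cast; ring
  have hf2 : ((shL (downR l i) i).factorial : ℝ) ≠ 0 := by positivity
  have hf3 : (shL l i : ℝ) ≠ 0 := by rw [hi]; positivity
  rw [hfac]
  field_simp

lemma frobG_eq_zero {N : ℕ} {l : Fin N → ℕ} {a b : Fin N} (hab : a < b) (h : shL l a = shL l b) :
    frobG l = 0 := by
  unfold frobG
  rw [Finset.prod_eq_zero (Finset.mem_univ a), zero_div]
  exact Finset.prod_eq_zero (Finset.mem_Ioi.2 hab) (by rw [h, sub_self])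

lemma sum_rev (N : ℕ) : ∑ i : Fin N, (((N - 1 - (i : ℕ) : ℕ)) : ℝ) = (N : ℝ) * (N - 1) / 2 := by
  rw [Fin.sum_univ_eq_sum_range (fun i => ((N - 1 - i : ℕ) : ℝ)) N,
    Finset.sum_range_reflect (fun i => (i : ℝ)) N]
  induction N with
  | zero => simp
  | succ n ih => rw [Finset.sum_range_succ, ih]; push_cast; ring

lemma sum_shL {N : ℕ} (l : Fin N → ℕ) :
    ∑ i, (shL l i : ℝ) = ∑ i, (l i : ℝ) + (N : ℝ) * (N - 1) / 2 := by
  rw [← sum_rev, ← Finset.sum_add_distrib]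
  exact Finset.sum_congr rfl fun i _ => by unfold shL; push_cast; rfl

lemma frobG_sum_up {N n : ℕ} {l : Fin N → ℕ} (hl : Antitone l) (hs : ∑ i, l i = n) (hn : n < N)
    (z z' : ℝ) :
    ∑ i : Fin N, frobG (upR l i) * ((z + ((l i : ℝ) - (i : ℕ))) * (z' + ((l i : ℝ) - (i : ℕ))))
      = (z * z' + n) * frobG l := by
  set v : Fin N → ℝ := fun j => (shL l j : ℝ) with hv
  have hinj : Function.Injective v :=
    fun a b h => (shL_strictAnti hl).injective (by simpa [hv] using h)
  obtain ⟨m0, m1⟩ := pf_moments Finset.univ v hinj.injOn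
  have hpos : ∀ i, v i + 1 ≠ 0 := fun i => by simp only [hv]; positivity
  have m2 := pf_expand Finset.univ v hinj.injOn (-1)
    (fun i _ h => hpos i (by rw [← h]; ring))
  -- last row is empty
  let k : Fin N := ⟨N - 1, by omega⟩
  have hk : l k = 0 := by
    by_contra hk
    have h1 : ∑ i : Fin N, 1 ≤ ∑ i, l i := by
      refine Finset.sum_le_sum fun i _ => ?_
      have : l k ≤ l i := hl (Fin.le_def.2 (by have := i.2; simp only [k]; omega))
      omega
    simp at h1; omega
  have hvk : v k = 0 := by simp [hv, shL, hk, k]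
  rw [Finset.prod_eq_zero (Finset.mem_univ k) (by rw [hvk]; norm_num)] at m2
  have m2' : ∑ i, pfA Finset.univ v i * (v i + 1)⁻¹ = 1 := by
    have : ∑ i, pfA Finset.univ v i * (-1 - v i)⁻¹ = - ∑ i, pfA Finset.univ v i * (v i + 1)⁻¹ := by
      rw [← Finset.sum_neg_distrib]
      refine Finset.sum_congr rfl fun i _ => ?_
      rw [show -1 - v i = -(v i + 1) by ring, inv_neg]; ring
    rw [this] at m2; linarith
  have hc : ∀ i : Fin N, (l i : ℝ) - (i : ℕ) = v i - (N - 1) := by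
    intro i
    have h := i.2
    have : shL l i + i + 1 = l i + N := by unfold shL; omega
    have : (shL l i : ℝ) + (i : ℕ) + 1 = l i + N := by exact_mod_cast this
    simp only [hv]; linarith
  have hsum : ∑ i, v i = n + (N : ℝ) * (N - 1) / 2 := by
    simp only [hv]; rw [sum_shL, ← hs]; push_cast; rfl
  have key : ∀ i : Fin N,
      frobG (upR l i) * ((z + ((l i : ℝ) - (i : ℕ))) * (z' + ((l i : ℝ) - (i : ℕ)))) =
      frobG l * (pfA Finset.univ v i * v i + (z + z' - 2 * N + 1) * pfA Finset.univ v i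
        + (z - N) * (z' - N) * (pfA Finset.univ v i * (v i + 1)⁻¹)) := by
    intro i
    rw [frobG_up hl, hc]
    have := hpos i
    have e : (shL l i : ℝ) = v i := rfl
    rw [e]
    field_simp
    ring
  simp_rw [key]
  rw [← Finset.mul_sum, Finset.sum_add_distrib, Finset.sum_add_distrib, ← Finset.mul_sum,
    ← Finset.mul_sum, m0, m1, m2', hsum]
  simp only [Finset.card_univ, Fintype.card_fin]
  ring

lemma frobG_sum_down {N n : ℕ} {l : Fin N → ℕ} (hl : Antitone l) (hs : ∑ i, l i = n) :
    ∑ i : Fin N, (if 0 < l i then frobG (downR l i) else 0) = n * frobG l := by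
  set v : Fin N → ℝ := fun j => -(shL l j : ℝ) with hv
  have hinj : Function.Injective v :=
    fun a b h => (shL_strictAnti hl).injective (by simpa [hv] using h)
  obtain ⟨m0, m1⟩ := pf_moments Finset.univ v hinj.injOn
  have hsum : ∑ i, v i = -(n + (N : ℝ) * (N - 1) / 2) := by
    simp only [hv]; rw [Finset.sum_neg_distrib, sum_shL, ← hs]; push_cast; rfl
  have key : ∀ i : Fin N, (if 0 < l i then frobG (downR l i) else 0) =
      -frobG l * (pfA Finset.univ v i * v i) := by
    intro i
    split_ifs with h
    · rw [frobG_down hl i h]; simp only [hv]; ring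
    · have hi : l i = 0 := by omega
      by_cases hN : (i : ℕ) = N - 1
      · have : v i = 0 := by simp [hv, shL, hi, hN]
        rw [this]; ring
      · have hlt : (i : ℕ) + 1 < N := by have := i.2; omega
        let j : Fin N := ⟨i + 1, hlt⟩
        have hij : i < j := Fin.lt_def.2 (by simp [j])
        have hj : l j = 0 := by have := hl hij.le; omega
        have : pfA Finset.univ v i = 0 := by
          unfold pfA
          refine Finset.prod_eq_zero (i := j) (by simp [hij.ne']) ?_
          have e : shL l i = shL l j + 1 := by simp only [shL, hi, hj, j]; omega
          simp only [hv, e]; push_cast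
          rw [show -((shL l j : ℝ) + 1) - -(shL l j : ℝ) = -1 by ring]; norm_num
        rw [this]; ring
  simp_rw [key]
  rw [← Finset.mul_sum, m1, hsum]
  simp only [Finset.card_univ, Fintype.card_fin]
  ring

lemma contP_up {N : ℕ} (z : ℝ) (l : Fin N → ℕ) (i : Fin N) :
    contP z (upR l i) = contP z l * (z + ((l i : ℝ) - (i : ℕ))) := by
  unfold contP
  rw [← Finset.mul_prod_erase _ _ (Finset.mem_univ i),
    ← Finset.mul_prod_erase Finset.univ (fun i : Fin N => ∏ j ∈ Finset.range (l i), (z + ((j : ℝ) - (i : ℕ)))) (Finset.mem_univ i)]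
  have e1 : ∏ k ∈ Finset.univ.erase i, ∏ j ∈ Finset.range (upR l i k), (z + ((j : ℝ) - (k : ℕ)))
     = ∏ k ∈ Finset.univ.erase i, ∏ j ∈ Finset.range (l k), (z + ((j : ℝ) - (k : ℕ))) :=
    Finset.prod_congr rfl fun k hk => by
      have : upR l i k = l k := by simp [upR, (Finset.mem_erase.1 hk).1]
      rw [this]
  have e2 : upR l i i = l i + 1 := by simp [upR]
  rw [e1, e2, Finset.prod_range_succ]; ring

/-- Partitions of `n` with at most `N` rows. -/
def parts (N n : ℕ) : Finset (Fin N → ℕ) :=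
  (Finset.piAntidiag Finset.univ n).filter fun l => Antitone l

lemma mem_parts {N n : ℕ} {l : Fin N → ℕ} : l ∈ parts N n ↔ ∑ i, l i = n ∧ Antitone l := by
  simp [parts]

lemma sum_upR {N : ℕ} (l : Fin N → ℕ) (i : Fin N) : ∑ j, upR l i j = ∑ j, l j + 1 := by
  unfold upR
  rw [Finset.sum_update_of_mem (Finset.mem_univ i), ← Finset.add_sum_erase _ l (Finset.mem_univ i)]
  rw [Finset.sdiff_singleton_eq_erase]; ring

lemma downR_upR {N : ℕ} (l : Fin N → ℕ) (i : Fin N) : downR (upR l i) i = l := by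
  simp [downR, upR]

lemma upR_downR {N : ℕ} (l : Fin N → ℕ) (i : Fin N) (h : 0 < l i) : upR (downR l i) i = l := by
  have : l i - 1 + 1 = l i := by omega
  simp [downR, upR, this]

lemma antitone_of_frobG_up {N : ℕ} {l : Fin N → ℕ} (hl : Antitone l) (i : Fin N)
    (h : frobG (upR l i) ≠ 0) : Antitone (upR l i) := by
  by_contra hcon
  apply h
  have : ¬ StrictAnti (shL (upR l i)) := fun h => hcon (antitone_of_shL h)
  have h2 := shL_strictAnti hl
  have hi : shL (upR l i) i = shL l i + 1 := by simp [shL, upR]; omega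
  have hj : ∀ j, j ≠ i → shL (upR l i) j = shL l j := fun j h => by simp [shL, upR, h]
  simp only [StrictAnti, not_forall] at this
  obtain ⟨a, b, hab, hn⟩ := this
  apply frobG_eq_zero hab
  have h3 := h2 hab
  by_cases ha : a = i
  · subst ha
    rw [hi, hj b hab.ne'] at hn
    omega
  · by_cases hb : b = i
    · subst hb
      rw [hi, hj a ha] at *
      omega
    · rw [hj a ha, hj b hb] at hn
      omega

lemma antitone_of_frobG_down {N : ℕ} {l : Fin N → ℕ} (hl : Antitone l) (i : Fin N) (h0 : 0 < l i)
    (h : frobG (downR l i) ≠ 0) : Antitone (downR l i) := by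
  by_contra hcon
  apply h
  have : ¬ StrictAnti (shL (downR l i)) := fun h => hcon (antitone_of_shL h)
  have h2 := shL_strictAnti hl
  have hi : shL l i = shL (downR l i) i + 1 := by simp [shL, downR]; omega
  have hj : ∀ j, j ≠ i → shL (downR l i) j = shL l j := fun j h => by simp [shL, downR, h]
  simp only [StrictAnti, not_forall] at this
  obtain ⟨a, b, hab, hn⟩ := this
  apply frobG_eq_zero hab
  have h3 := h2 hab
  by_cases ha : a = i
  · subst ha
    rw [hj b hab.ne'] at *
    omega
  · by_cases hb : b = i
    · subst hb
      rw [hj a ha] at *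
      omega
    · rw [hj a ha, hj b hb] at hn
      omega

/-- The partition sum. -/
def partSum (z z' : ℝ) (N n : ℕ) : ℝ := ∑ l ∈ parts N n, contP z l * contP z' l * frobG l ^ 2

lemma partSum_succ (z z' : ℝ) {N n : ℕ} (hn : n < N) :
    ((n : ℝ) + 1) * partSum z z' N (n + 1) = (z * z' + n) * partSum z z' N n := by
  unfold partSum
  have L : ((n : ℝ) + 1) * ∑ l ∈ parts N (n + 1), contP z l * contP z' l * frobG l ^ 2 =
      ∑ p ∈ parts N (n + 1) ×ˢ (Finset.univ : Finset (Fin N)),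
        contP z p.1 * contP z' p.1 * frobG p.1 *
          (if 0 < p.1 p.2 then frobG (downR p.1 p.2) else 0) := by
    rw [Finset.sum_product, Finset.mul_sum]
    refine Finset.sum_congr rfl fun l hl => ?_
    obtain ⟨h1, h2⟩ := mem_parts.1 hl
    simp only
    rw [← Finset.mul_sum, frobG_sum_down h2 h1]; push_cast; ring
  have R : (z * z' + n) * ∑ l ∈ parts N n, contP z l * contP z' l * frobG l ^ 2 =
      ∑ p ∈ parts N n ×ˢ (Finset.univ : Finset (Fin N)),
        contP z (upR p.1 p.2) * contP z' (upR p.1 p.2) * frobG (upR p.1 p.2) * frobG p.1 := by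
    rw [Finset.sum_product, Finset.mul_sum]
    refine Finset.sum_congr rfl fun l hl => ?_
    obtain ⟨h1, h2⟩ := mem_parts.1 hl
    have := frobG_sum_up h2 h1 hn z z'
    calc _ = contP z l * contP z' l * frobG l * ((z * z' + n) * frobG l) := by ring
      _ = _ := by
        rw [← this, Finset.mul_sum]
        refine Finset.sum_congr rfl fun i _ => ?_
        simp only [contP_up]; ring
  rw [L, R]
  symm
  refine Finset.sum_bij_ne_zero (fun p _ _ => (upR p.1 p.2, p.2)) ?_ ?_ ?_ ?_
  · rintro ⟨l, i⟩ hp h0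
    simp only [Finset.mem_product, Finset.mem_univ, and_true] at hp ⊢
    obtain ⟨h1, h2⟩ := mem_parts.1 hp
    refine mem_parts.2 ⟨by rw [sum_upR, h1], antitone_of_frobG_up h2 i ?_⟩
    intro h; apply h0; simp [h]
  · rintro ⟨l, i⟩ _ _ ⟨l', i'⟩ _ _ h
    simp only [Prod.mk.injEq] at h
    obtain ⟨h1, rfl⟩ := h
    have := congrArg (fun f => downR f i) h1
    simp only [downR_upR] at this
    rw [this]
  · rintro ⟨l, i⟩ hp h0
    simp only [Finset.mem_product, Finset.mem_univ, and_true] at hp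
    obtain ⟨h1, h2⟩ := mem_parts.1 hp
    have hpos : 0 < l i := by
      by_contra h; apply h0; simp [h]
    simp only [hpos, if_true] at h0
    have hd : frobG (downR l i) ≠ 0 := by
      intro h; apply h0; simp [h]
    refine ⟨(downR l i, i), ?_, ?_, ?_⟩
    · simp only [Finset.mem_product, Finset.mem_univ, and_true]
      refine mem_parts.2 ⟨?_, antitone_of_frobG_down h2 i hpos hd⟩
      have := sum_upR (downR l i) i
      rw [upR_downR _ _ hpos] at this
      omega
    · simp only [upR_downR _ _ hpos]; exact h0
    · simp only [upR_downR _ _ hpos]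
  · rintro ⟨l, i⟩ _ _
    have : 0 < upR l i i := by simp [upR]
    simp only [this, if_true, downR_upR]

/-- Row lengths of a Young diagram, truncated to `N` rows. -/
def rowF (N : ℕ) (Y : YoungDiagram) : Fin N → ℕ := fun i => Y.rowLen i

lemma rowF_antitone (N : ℕ) (Y : YoungDiagram) : Antitone (rowF N Y) :=
  fun _ _ h => Y.rowLen_anti _ _ h

lemma colLen_le_card (Y : YoungDiagram) (j : ℕ) : Y.colLen j ≤ Y.card := by
  rw [Y.colLen_eq_card]
  exact Finset.card_le_card (Finset.filter_subset _ _)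

lemma cells_eq_sigma {N : ℕ} (Y : YoungDiagram) (hN : Y.card ≤ N) :
    Y.cells = (Finset.univ.sigma fun i : Fin N => Finset.range (rowF N Y i)).image
      (fun p => ((p.1 : ℕ), p.2)) := by
  ext ⟨i, j⟩
  simp only [Finset.mem_image, Finset.mem_sigma, Finset.mem_univ, true_and, Finset.mem_range,
    YoungDiagram.mem_cells, rowF, Prod.mk.injEq, Sigma.exists]
  constructor
  · intro h
    have h1 := YoungDiagram.mem_iff_lt_colLen.1 h
    have h2 := colLen_le_card Y j
    exact ⟨⟨i, by omega⟩, j, YoungDiagram.mem_iff_lt_rowLen.1 h, rfl, rfl⟩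
  · rintro ⟨a, b, h, rfl, rfl⟩
    exact YoungDiagram.mem_iff_lt_rowLen.2 h

lemma sigma_inj {N : ℕ} : Function.Injective (fun p : (Σ _ : Fin N, ℕ) => ((p.1 : ℕ), p.2)) := by
  rintro ⟨a, b⟩ ⟨c, d⟩ h
  simp only [Prod.mk.injEq] at h
  obtain ⟨h1, rfl⟩ := h
  have := Fin.ext h1
  subst this
  rfl

lemma cells_prod {N : ℕ} (Y : YoungDiagram) (hN : Y.card ≤ N) (f : ℕ × ℕ → ℝ) :
    ∏ c ∈ Y.cells, f c = ∏ i : Fin N, ∏ j ∈ Finset.range (rowF N Y i), f (i, j) := by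
  rw [cells_eq_sigma Y hN, Finset.prod_image sigma_inj.injOn, Finset.prod_sigma]

lemma sum_rowF {N : ℕ} (Y : YoungDiagram) (hN : Y.card ≤ N) : ∑ i, rowF N Y i = Y.card := by
  unfold YoungDiagram.card
  rw [cells_eq_sigma Y hN, Finset.card_image_of_injective _ sigma_inj, Finset.card_sigma]
  simp

lemma hook_row {N : ℕ} (Y : YoungDiagram) (hN : Y.card ≤ N) (i : Fin N) :
    (∏ j ∈ Finset.range (rowF N Y i), (hookLen Y (i, j) : ℝ)) *
      ∏ q ∈ Finset.Ioi i, ((shL (rowF N Y) i : ℝ) - shL (rowF N Y) q) =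
      ((shL (rowF N Y) i).factorial : ℝ) := by
  have hanti := shL_strictAnti (rowF_antitone N Y)
  set L := shL (rowF N Y) with hL
  have hcl : ∀ j, Y.colLen j ≤ N := fun j => (colLen_le_card Y j).trans hN
  let m : ℕ → ℕ := fun j => N - Y.colLen j + j
  have hm : StrictMono m := by
    intro a b hab
    have := Y.colLen_anti a b hab.le
    simp only [m]; omega
  have hi := i.2
  have hLk : ∀ k : Fin N, L k = Y.rowLen k + (N - 1 - k) := fun k => rfl
  have hmL : ∀ j < Y.rowLen i, hookLen Y (i, j) + m j = L i := by
    intro j hj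
    have h1 := YoungDiagram.mem_iff_lt_colLen.1 (YoungDiagram.mem_iff_lt_rowLen.2 hj)
    have := hcl j
    simp only [m, hookLen, hLk]; omega
  have hhook : ∀ j < Y.rowLen i, 0 < hookLen Y (i, j) := by
    intro j hj
    have h1 := YoungDiagram.mem_iff_lt_colLen.1 (YoungDiagram.mem_iff_lt_rowLen.2 hj)
    simp only [hookLen]; omega
  have hdisj : Disjoint ((Finset.range (Y.rowLen i)).image m) ((Finset.Ioi i).image L) := by
    rw [Finset.disjoint_left]
    intro t h1 h2
    obtain ⟨j, hj, rfl⟩ := Finset.mem_image.1 h1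
    obtain ⟨k, hk, hkj⟩ := Finset.mem_image.1 h2
    have := hcl j
    have hk2 := k.2
    have e : j < Y.rowLen k ↔ (k : ℕ) < Y.colLen j := by
      rw [← YoungDiagram.mem_iff_lt_rowLen, YoungDiagram.mem_iff_lt_colLen]
    rw [hLk] at hkj
    simp only [m] at hkj
    by_cases h : j < Y.rowLen k
    · have := e.1 h; omega
    · have : ¬ (k : ℕ) < Y.colLen j := fun h' => h (e.2 h')
      omega
  have hunion : (Finset.range (Y.rowLen i)).image m ∪ (Finset.Ioi i).image L =
      Finset.range (L i) := by
    apply Finset.eq_of_subset_of_card_le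
    · intro t ht
      rw [Finset.mem_range]
      rcases Finset.mem_union.1 ht with h | h
      · obtain ⟨j, hj, rfl⟩ := Finset.mem_image.1 h
        have hj := Finset.mem_range.1 hj
        have := hmL j hj
        have := hhook j hj
        omega
      · obtain ⟨k, hk, rfl⟩ := Finset.mem_image.1 h
        exact hanti (Finset.mem_Ioi.1 hk)
    · rw [Finset.card_union_of_disjoint hdisj, Finset.card_image_of_injective _ hm.injective,
        Finset.card_image_of_injective _ hanti.injective]
      simp [hLk]
  have hfact : ∏ t ∈ Finset.range (L i), ((L i : ℝ) - t) = ((L i).factorial : ℝ) := by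
    rw [← Finset.prod_range_reflect, ← Finset.prod_range_add_one_eq_factorial]
    push_cast
    refine Finset.prod_congr rfl fun t ht => ?_
    have ht := Finset.mem_range.1 ht
    have : L i - 1 - t + t + 1 = L i := by omega
    have : ((L i - 1 - t : ℕ) : ℝ) + t + 1 = L i := by exact_mod_cast this
    linarith
  rw [← hfact, ← hunion, Finset.prod_union hdisj, Finset.prod_image hm.injective.injOn,
    Finset.prod_image hanti.injective.injOn]
  congr 1
  refine Finset.prod_congr rfl fun j hj => ?_
  have := hmL j (Finset.mem_range.1 hj)
  have : (hookLen Y (i, j) : ℝ) + m j = L i := by exact_mod_cast this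
  linarith

lemma zWeightR_eq {N : ℕ} (z z' : ℝ) (Y : YoungDiagram) (hN : Y.card ≤ N) :
    zWeightR z z' Y = contP z (rowF N Y) * contP z' (rowF N Y) * frobG (rowF N Y) ^ 2 := by
  have hg : frobG (rowF N Y) = (∏ i : Fin N, ∏ j ∈ Finset.range (rowF N Y i),
      (hookLen Y (i, j) : ℝ))⁻¹ := by
    unfold frobG
    have h1 : ∏ p : Fin N, ((shL (rowF N Y) p).factorial : ℝ) ≠ 0 :=
      Finset.prod_ne_zero_iff.2 fun p _ => by positivity
    have h2 := Finset.prod_congr rfl fun (i : Fin N) (_ : i ∈ Finset.univ) => hook_row Y hN i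
    rw [Finset.prod_mul_distrib] at h2
    rw [← h2] at h1 ⊢
    obtain ⟨h3, h4⟩ := mul_ne_zero_iff.1 h1
    field_simp
  unfold zWeightR
  rw [cells_prod Y hN, hg, contP, contP]
  simp only [Finset.prod_div_distrib, Finset.prod_mul_distrib, Finset.prod_pow]
  rw [div_eq_mul_inv, inv_pow]
  simp [cellContent]

/-- Young diagram from row lengths. -/
def ydOf {N : ℕ} (l : Fin N → ℕ) (hl : Antitone l) : YoungDiagram where
  cells := (Finset.univ.sigma fun i : Fin N => Finset.range (l i)).image
      (fun p => ((p.1 : ℕ), p.2))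
  isLowerSet := by
    rintro ⟨a, b⟩ ⟨c, d⟩ hle h
    obtain ⟨h1, h2⟩ := Prod.mk_le_mk.1 hle
    simp only [Finset.coe_image, Set.mem_image, Finset.mem_coe, Finset.mem_sigma, Finset.mem_univ,
      true_and, Finset.mem_range, Prod.mk.injEq, Sigma.exists] at h ⊢
    obtain ⟨i, j, hij, rfl, rfl⟩ := h
    refine ⟨⟨c, by have := i.2; omega⟩, d, ?_, rfl, rfl⟩
    have : l i ≤ l ⟨c, by have := i.2; omega⟩ := hl (Fin.le_def.2 h1)
    omega

lemma rowF_ydOf {N : ℕ} (l : Fin N → ℕ) (hl : Antitone l) : rowF N (ydOf l hl) = l := by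
  funext i
  have h : ∀ j, j < (ydOf l hl).rowLen i ↔ j < l i := by
    intro j
    rw [← YoungDiagram.mem_iff_lt_rowLen, ← YoungDiagram.mem_cells]
    simp only [ydOf, Finset.mem_image, Finset.mem_sigma, Finset.mem_univ,
      true_and, Finset.mem_range, Prod.mk.injEq, Sigma.exists]
    constructor
    · rintro ⟨a, b, h, h1, rfl⟩
      rwa [← Fin.ext h1]
    · intro h; exact ⟨i, j, h, rfl, rfl⟩
  unfold rowF
  have h1 := h (l i)
  have h2 := h ((ydOf l hl).rowLen i)
  omega

lemma card_ydOf {N : ℕ} (l : Fin N → ℕ) (hl : Antitone l) : (ydOf l hl).card = ∑ i, l i := by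
  unfold YoungDiagram.card ydOf
  simp only
  rw [Finset.card_image_of_injective _ sigma_inj, Finset.card_sigma]
  simp

lemma tsum_yd {N n : ℕ} (z z' : ℝ) (hn : n ≤ N) :
    ∑' Y : {Y : YoungDiagram // Y.card = n}, zWeightR z z' Y.1 = partSum z z' N n := by
  let φ : {Y : YoungDiagram // Y.card = n} → {l // l ∈ parts N n} := fun Y =>
    ⟨rowF N Y.1, mem_parts.2 ⟨by rw [sum_rowF _ (Y.2.trans_le hn), Y.2], rowF_antitone _ _⟩⟩
  have hφ : Function.Bijective φ := by
    constructor
    · rintro ⟨Y, hY⟩ ⟨Y', hY'⟩ h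
      have h : rowF N Y = rowF N Y' := congrArg Subtype.val h
      apply Subtype.ext
      apply YoungDiagram.ext
      show Y.cells = Y'.cells
      rw [cells_eq_sigma Y (hY.trans_le hn), cells_eq_sigma Y' (hY'.trans_le hn), h]
    · rintro ⟨l, hl⟩
      obtain ⟨h1, h2⟩ := mem_parts.1 hl
      exact ⟨⟨ydOf l h2, by rw [card_ydOf, h1]⟩, Subtype.ext (rowF_ydOf l h2)⟩
  have e := (Equiv.ofBijective φ hφ).tsum_eq
    (fun l : {l // l ∈ parts N n} => contP z l.1 * contP z' l.1 * frobG l.1 ^ 2)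
  rw [Finset.tsum_subtype (parts N n) (fun l => contP z l * contP z' l * frobG l ^ 2)] at e
  unfold partSum
  rw [← e]
  exact tsum_congr fun Y => zWeightR_eq z z' Y.1 (Y.2.trans_le hn)

lemma tsum_zWeightR (z z' : ℝ) (n : ℕ) :
    (n.factorial : ℝ) * ∑' Y : {Y : YoungDiagram // Y.card = n}, zWeightR z z' Y.1 =
      (ascPochhammer ℝ n).eval (z * z') := by
  induction n with
  | zero =>
    have hu : ∀ Y : {Y : YoungDiagram // Y.card = 0}, Y = ⟨⊥, by simp [YoungDiagram.card]⟩ := by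
      rintro ⟨Y, hY⟩
      apply Subtype.ext
      apply YoungDiagram.ext
      simpa [YoungDiagram.card] using hY
    rw [tsum_eq_single ⟨⊥, by simp [YoungDiagram.card]⟩ (fun Y h => absurd (hu Y) h)]
    simp [zWeightR]
  | succ n ih =>
    rw [ascPochhammer_succ_eval, ← ih, tsum_yd z z' (le_refl (n + 1)), tsum_yd z z' (Nat.le_succ n),
      Nat.factorial_succ]
    have := partSum_succ z z' (Nat.lt_succ_self n)
    push_cast
    linear_combination (n.factorial : ℝ) * this

lemma same_sign (m k : ℤ) (z z' : ℝ) (hz : (m : ℝ) < z ∧ z < m + 1)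
    (hz' : (m : ℝ) < z' ∧ z' < m + 1) : 0 < (z + k) * (z' + k) := by
  rcases le_or_gt 0 (m + k) with h | h
  · have : (0 : ℝ) ≤ m + k := by exact_mod_cast h
    exact mul_pos (by linarith) (by linarith)
  · have : (m : ℝ) + k + 1 ≤ 0 := by exact_mod_cast h
    exact mul_pos_of_neg_of_neg (by linarith) (by linarith)

/-- **complementary series.** Let `m ∈ ℤ` and `z, z' ∈ ℝ` with
`m < z < m+1` and `m < z' < m+1`.  Then for every `n` and every partition `λ` of `n`,
`M_n(λ) = (n!/(zz')_n) Π_{□∈λ}(z+c(□))(z'+c(□))/h(□)²` is strictly positive, and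
`Σ_{|λ|=n} M_n(λ) = 1`. -/
theorem zMeasure_complementary_series_prob (m : ℤ) (z z' : ℝ)
    (hz : (m : ℝ) < z ∧ z < m + 1) (hz' : (m : ℝ) < z' ∧ z' < m + 1) (n : ℕ) :
    (∀ Y : YoungDiagram, Y.card = n →
      0 < (n.factorial : ℝ) / (ascPochhammer ℝ n).eval (z * z') * zWeightR z z' Y) ∧
    ∑' Y : {Y : YoungDiagram // Y.card = n},
        (n.factorial : ℝ) / (ascPochhammer ℝ n).eval (z * z') * zWeightR z z' Y.1 = 1 := by
  have hzz : 0 < z * z' := by simpa using same_sign m 0 z z' hz hz'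
  have hp : 0 < (ascPochhammer ℝ n).eval (z * z') := ascPochhammer_pos n _ hzz
  constructor
  · intro Y _
    refine mul_pos (div_pos (by positivity) hp) (Finset.prod_pos fun c hc => ?_)
    refine div_pos (same_sign m _ z z' hz hz') ?_
    have h1 := YoungDiagram.mem_iff_lt_rowLen.1 ((YoungDiagram.mem_cells (μ := Y) (c.1, c.2)).1 hc)
    have h2 := YoungDiagram.mem_iff_lt_colLen.1 ((YoungDiagram.mem_cells (μ := Y) (c.1, c.2)).1 hc)
    have : 0 < hookLen Y c := by unfold hookLen; omega
    positivity
  · rw [tsum_mul_left, div_mul_eq_mul_div, tsum_zWeightR, div_self hp.ne']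

end
end

section
/- Let m ∈ ℤ and let z, z' be real numbers with m < z < m+1 and m < z' < m+1. For k ∈ ℤ+1/2 define q_k = Γ(z'+k+1/2)/Γ(z+k+1/2), where Γ is the Gamma function. Then for every k ∈ ℤ+1/2: (i) q_k > 0, and (ii) (z+k+1/2)·q_{k+1} = (z'+k+1/2)·q_k. Consequently the Hermitian form Q on the span of {v_k}_{k∈ℤ+1/2} defined by Q(v_k, v_l) = δ_{kl}·q_k is positive definite and satisfies the invariance Q(U u, v) = Q(u, D v) for the operators U v_k = (z+k+1/2)v_{k+1} and D v_k = (z'+k−1/2)v_{k−1}. -/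
open scoped Classical

noncomputable section

/-- `q_k = Γ(z'+k+1/2)/Γ(z+k+1/2)` for the half-integer `k = a + 1/2` (`a ∈ ℤ`), so that
`z+k+1/2 = z+a+1` and `z'+k+1/2 = z'+a+1`. -/
def qGamma (z z' : ℝ) (a : ℤ) : ℝ :=
  Real.Gamma (z' + a + 1) / Real.Gamma (z + a + 1)

/-- The Hermitian form `Q` on the span of `{v_k}_{k ∈ ℤ+1/2}` (finitely supported complex
functions on ℤ in the encoding `k = a + 1/2`) with `Q(v_k, v_l) = δ_{kl} q_k`. -/
def Qform (z z' : ℝ) (f g : ℤ →₀ ℂ) : ℂ :=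
  f.sum fun a c => (starRingEnd ℂ) c * g a * (qGamma z z' a : ℂ)

/-- The operator `U v_k = (z+k+1/2) v_{k+1}`; in the encoding `k = a + 1/2` the
coefficient is `z + a + 1`. -/
def Uop (z : ℝ) (f : ℤ →₀ ℂ) : ℤ →₀ ℂ :=
  f.sum fun a c => Finsupp.single (a + 1) (((z : ℂ) + (a : ℂ) + 1) * c)

/-- The operator `D v_k = (z'+k−1/2) v_{k−1}`; in the encoding `k = a + 1/2` the
coefficient is `z' + a`. -/
def Dop (z' : ℝ) (f : ℤ →₀ ℂ) : ℤ →₀ ℂ :=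
  f.sum fun a c => Finsupp.single (a - 1) (((z' : ℂ) + (a : ℂ)) * c)

theorem neg_left_aux {x y : ℝ} (hx : x < 0) : x * y < 0 ↔ 0 < y :=
  ⟨fun h => by by_contra h'; nlinarith, fun h => mul_neg_of_neg_of_pos hx h⟩

theorem shift_mul_pos (m : ℤ) (z z' : ℝ)
    (hz : (m : ℝ) < z ∧ z < m + 1) (hz' : (m : ℝ) < z' ∧ z' < m + 1) (a : ℤ) :
    0 < (z + a + 1) * (z' + a + 1) := by
  rcases le_or_gt 0 (m + a + 1) with h | h
  · have h' : (0 : ℝ) ≤ m + a + 1 := by exact_mod_cast h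
    apply mul_pos <;> linarith [hz.1, hz'.1]
  · have h1 : m + a + 1 + 1 ≤ 0 := by omega
    have h' : (m : ℝ) + a + 1 + 1 ≤ 0 := by exact_mod_cast h1
    apply mul_pos_of_neg_of_neg <;> linarith [hz.2, hz'.2]

theorem qGamma_rec (z z' : ℝ) (a : ℤ) (h : 0 < (z + a + 1) * (z' + a + 1)) :
    (z + a + 1) * qGamma z z' (a + 1) = (z' + a + 1) * qGamma z z' a := by
  have h1 : z + a + 1 ≠ 0 := fun h0 => by simp [h0] at h
  have h2 : z' + a + 1 ≠ 0 := fun h0 => by simp [h0] at h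
  have e1 : Real.Gamma (z + a + 1 + 1) = _ := Real.Gamma_add_one h1
  have e2 : Real.Gamma (z' + a + 1 + 1) = _ := Real.Gamma_add_one h2
  unfold qGamma
  push_cast
  rw [← add_assoc, ← add_assoc, e1, e2, mul_div_mul_comm, ← mul_assoc, mul_div_cancel₀ _ h1]

theorem qGamma_pos_iff (z z' : ℝ) (a : ℤ) (h : 0 < (z + a + 1) * (z' + a + 1)) :
    0 < qGamma z z' (a + 1) ↔ 0 < qGamma z z' a := by
  have e := qGamma_rec z z' a h
  rcases mul_pos_iff.1 h with ⟨h1, h2⟩ | ⟨h1, h2⟩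
  · rw [← mul_pos_iff_of_pos_left h1, e, mul_pos_iff_of_pos_left h2]
  · rw [← neg_left_aux h1, e, neg_left_aux h2]

theorem qGamma_pos (m : ℤ) (z z' : ℝ)
    (hz : (m : ℝ) < z ∧ z < m + 1) (hz' : (m : ℝ) < z' ∧ z' < m + 1) (a : ℤ) :
    0 < qGamma z z' a := by
  induction a using Int.inductionOn' (b := -m) with
  | zero =>
    unfold qGamma
    push_cast
    exact div_pos (Real.Gamma_pos_of_pos (by linarith [hz'.1]))
      (Real.Gamma_pos_of_pos (by linarith [hz.1]))
  | succ k _ ih => exact (qGamma_pos_iff z z' k (shift_mul_pos m z z' hz hz' k)).2 ih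
  | pred k _ ih =>
    refine (qGamma_pos_iff z z' (k - 1) (shift_mul_pos m z z' hz hz' (k - 1))).1 ?_
    simpa using ih

theorem Dop_apply (z' : ℝ) (f : ℤ →₀ ℂ) (a : ℤ) :
    Dop z' f a = ((z' : ℂ) + a + 1) * f (a + 1) := by
  unfold Dop
  rw [Finsupp.sum_apply, Finsupp.sum, Finset.sum_eq_single (a + 1)]
  · simp; ring_nf; simp
  · intro b _ hb
    exact Finsupp.single_eq_of_ne (by omega)
  · intro h
    simp [Finsupp.notMem_support_iff.1 h]

/-- **complementary series unitarity.** Let `m ∈ ℤ` and `z, z' ∈ (m, m+1)`.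
Then for every half-integer `k = a + 1/2`: (i) `q_k > 0`, and
(ii) `(z+k+1/2)·q_{k+1} = (z'+k+1/2)·q_k`.  Consequently the Hermitian form `Q` with
`Q(v_k,v_l) = δ_{kl} q_k` is positive definite (`Q(f,f)` is real and `> 0` for `f ≠ 0`)
and satisfies the invariance `Q(Uu, v) = Q(u, Dv)`. -/
theorem qGamma_pos_rec_and_Qform_invariant (m : ℤ) (z z' : ℝ)
    (hz : (m : ℝ) < z ∧ z < m + 1) (hz' : (m : ℝ) < z' ∧ z' < m + 1) :
    (∀ a : ℤ, 0 < qGamma z z' a) ∧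
    (∀ a : ℤ, (z + a + 1) * qGamma z z' (a + 1) = (z' + a + 1) * qGamma z z' a) ∧
    (∀ f : ℤ →₀ ℂ, f ≠ 0 → (Qform z z' f f).im = 0 ∧ 0 < (Qform z z' f f).re) ∧
    (∀ u v : ℤ →₀ ℂ, Qform z z' (Uop z u) v = Qform z z' u (Dop z' v)) := by
  refine ⟨qGamma_pos m z z' hz hz',
    fun a => qGamma_rec z z' a (shift_mul_pos m z z' hz hz' a), ?_, ?_⟩
  · intro f hf
    have e : Qform z z' f f =
        ((∑ a ∈ f.support, Complex.normSq (f a) * qGamma z z' a : ℝ) : ℂ) := by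
      unfold Qform Finsupp.sum
      push_cast
      refine Finset.sum_congr rfl fun a _ => ?_
      rw [Complex.normSq_eq_conj_mul_self]
    rw [e]
    refine ⟨Complex.ofReal_im _, ?_⟩
    rw [Complex.ofReal_re]
    refine Finset.sum_pos (fun a ha => ?_) (Finsupp.support_nonempty_iff.2 hf)
    exact mul_pos (Complex.normSq_pos.2 (Finsupp.mem_support_iff.1 ha))
      (qGamma_pos m z z' hz hz' a)
  · intro u v
    unfold Qform
    conv_lhs => unfold Uop
    rw [Finsupp.sum_sum_index (by simp) (by intros; rw [map_add]; ring)]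
    refine Finsupp.sum_congr fun a _ => ?_
    rw [Finsupp.sum_single_index (by simp), Dop_apply]
    have e := congrArg (fun x : ℝ => (x : ℂ))
      (qGamma_rec z z' a (shift_mul_pos m z z' hz hz' a))
    push_cast at e
    simp only [map_mul, map_add, Complex.conj_ofReal, map_one, map_intCast]
    linear_combination (starRingEnd ℂ) (u a) * v (a + 1) * e

end
end
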